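/- Let A and C be real m×m matrices with rank(A) ≤ 1. Then for every k with 1 ≤ k ≤ m, σ_k(C + A) = σ_k(C) + tr(T_{k−1}(C)·A). -/

import Mathlib

/-- `sigmaP A j` is the coefficient `σ_j(A)` of `t^j` in `det(I + t·A)`. -/
noncomputable def sigmaP {m : ℕ} (A : Matrix (Fin m) (Fin m) ℝ) (j : ℕ) : ℝ :=
  Polynomial.coeff (Matrix.det ((1 : Matrix (Fin m) (Fin m) (Polynomial ℝ)) +
    (Polynomial.X : Polynomial ℝ) • A.map Polynomial.C)) j

/-- The Newton transformation
`T_k(A) = σ_k(A)·I − σ_{k−1}(A)·A + σ_{k−2}(A)·A² − ··· + (−1)^k·A^k`. -/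
noncomputable def newtonT {m : ℕ} (A : Matrix (Fin m) (Fin m) ℝ) (k : ℕ) :
    Matrix (Fin m) (Fin m) ℝ :=
  ∑ i ∈ Finset.range (k + 1), ((-1 : ℝ) ^ i * sigmaP A (k - i)) • A ^ i

/-- `sigmaMulti A lam` is the coefficient `σ_λ(A₁, …, A_k)` of `t₁^{λ₁}···t_k^{λ_k}` in
`det(I_m + t₁A₁ + ··· + t_kA_k)`. -/
noncomputable def sigmaMulti {m k : ℕ} (A : Fin k → Matrix (Fin m) (Fin m) ℝ)
    (lam : Fin k → ℕ) : ℝ :=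
  MvPolynomial.coeff (Finsupp.equivFunOnFinite.symm lam)
    (Matrix.det ((1 : Matrix (Fin m) (Fin m) (MvPolynomial (Fin k) ℝ)) +
      ∑ i, (MvPolynomial.X i : MvPolynomial (Fin k) ℝ) • (A i).map MvPolynomial.C))

theorem s4_sigma_ps {m : ℕ} (A : Matrix (Fin m) (Fin m) ℝ) (j : ℕ) :
    sigmaP A j = PowerSeries.coeff j (Matrix.det ((1 : Matrix (Fin m) (Fin m) (PowerSeries ℝ)) +
      (PowerSeries.X : PowerSeries ℝ) • A.map (PowerSeries.C))) := by
  unfold sigmaP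
  rw [← Polynomial.coeff_coe]
  rw [← Polynomial.coeToPowerSeries.ringHom_apply, RingHom.map_det]
  congr 2
  refine Matrix.ext fun i j => ?_
  simp [Matrix.one_apply]
  split_ifs <;> simp [mul_comm]

theorem s4_sigma_zero {m : ℕ} (A : Matrix (Fin m) (Fin m) ℝ) : sigmaP A 0 = 1 := by
  rw [s4_sigma_ps, PowerSeries.coeff_zero_eq_constantCoeff_apply, RingHom.map_det]
  rw [← Matrix.det_one (n := Fin m) (R := ℝ)]
  congr 1
  refine Matrix.ext fun i j => ?_
  simp [Matrix.one_apply]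

theorem s4_newton_zero {m : ℕ} (A : Matrix (Fin m) (Fin m) ℝ) : newtonT A 0 = 1 := by
  simp [newtonT, s4_sigma_zero]

theorem s4_newton_succ {m : ℕ} (A : Matrix (Fin m) (Fin m) ℝ) (k : ℕ) :
    newtonT A (k + 1) + newtonT A k * A = sigmaP A (k + 1) • 1 := by
  unfold newtonT
  rw [Finset.sum_range_succ', add_right_comm, Finset.sum_mul, ← Finset.sum_add_distrib,
    Finset.sum_eq_zero]
  · simp
  · intro i hi
    rw [Nat.add_sub_add_right, Matrix.smul_mul, ← pow_succ, ← add_smul, pow_succ]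
    ring_nf
    simp

theorem s4_rank {m : ℕ} (A : Matrix (Fin m) (Fin m) ℝ) (hA : A.rank ≤ 1) :
    ∃ u v : Fin m → ℝ, A = Matrix.vecMulVec u v := by
  unfold Matrix.rank at hA
  rw [finrank_le_one_iff] at hA
  obtain ⟨⟨u, hu⟩, h⟩ := hA
  have h2 : ∀ j, ∃ c : ℝ, c • u = A.col j := by
    intro j
    obtain ⟨c, hc⟩ := h ⟨A.mulVecLin (Pi.single j 1), LinearMap.mem_range_self _ _⟩
    refine ⟨c, ?_⟩
    have := congrArg Subtype.val hc
    simpa using this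
  choose v hv using h2
  refine ⟨u, v, ?_⟩
  ext i j
  have := congrFun (hv j) i
  simp [Matrix.vecMulVec_apply] at this ⊢
  linarith

theorem stmt4 {m : ℕ} (A C : Matrix (Fin m) (Fin m) ℝ) (hA : A.rank ≤ 1)
    (k : ℕ) (hk1 : 1 ≤ k) (hkm : k ≤ m) :
    sigmaP (C + A) k = sigmaP C k + Matrix.trace (newtonT C (k - 1) * A) := by
  obtain ⟨u, v, rfl⟩ := s4_rank A hA
  obtain ⟨k, rfl⟩ : ∃ n, k = n + 1 := ⟨k - 1, by omega⟩
  rw [Nat.add_sub_cancel]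
  set M : Matrix (Fin m) (Fin m) (PowerSeries ℝ) :=
    1 + (PowerSeries.X : PowerSeries ℝ) • C.map (PowerSeries.C) with hM
  set P : Matrix (Fin m) (Fin m) (PowerSeries ℝ) :=
    Matrix.of fun i j => PowerSeries.mk fun n => newtonT C n i j with hP
  have hdet : ∀ n, PowerSeries.coeff n M.det = sigmaP C n := fun n => (s4_sigma_ps C n).symm
  have hu : IsUnit M.det := by
    rw [PowerSeries.isUnit_iff_constantCoeff, ← PowerSeries.coeff_zero_eq_constantCoeff_apply,
      hdet, s4_sigma_zero]
    exact isUnit_one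
  have hPM : P * M = M.det • 1 := by
    ext i j n
    have e : (P * M) i j = P i j + PowerSeries.X * ∑ l, P i l * PowerSeries.C (C l j) := by
      rw [hM, mul_add, mul_one, Matrix.mul_smul]
      simp [Matrix.mul_apply]
    rw [e]
    have e1 : (M.det • (1 : Matrix (Fin m) (Fin m) (PowerSeries ℝ))) i j
        = M.det * PowerSeries.C ((1 : Matrix (Fin m) (Fin m) ℝ) i j) := by
      simp only [Matrix.smul_apply, Matrix.one_apply, smul_eq_mul]
      split_ifs <;> simp
    rw [e1, PowerSeries.coeff_mul_C, hdet]
    cases n with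
    | zero => simp [hP, s4_newton_zero, s4_sigma_zero]
    | succ n =>
      have := congrFun (congrFun (s4_newton_succ C n) i) j
      simpa [hP, PowerSeries.coeff_succ_X_mul, Matrix.mul_apply] using this
  have hadj : P = M.adjugate := by
    have h1 : P * M * M⁻¹ = M.adjugate * M * M⁻¹ := by rw [hPM, Matrix.adjugate_mul]
    rwa [Matrix.mul_nonsing_inv_cancel_right _ _ hu,
      Matrix.mul_nonsing_inv_cancel_right _ _ hu] at h1
  have key : Matrix.det (1 + (PowerSeries.X : PowerSeries ℝ) •
      (C + Matrix.vecMulVec u v).map (PowerSeries.C)) =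
      M.det + PowerSeries.X * ∑ i, ∑ j, P i j * PowerSeries.C (u j * v i) := by
    have e : 1 + (PowerSeries.X : PowerSeries ℝ) • (C + Matrix.vecMulVec u v).map (PowerSeries.C)
        = M + Matrix.replicateCol Unit (fun i => PowerSeries.X * PowerSeries.C (u i)) *
          Matrix.replicateRow Unit (fun i => PowerSeries.C (v i)) := by
      refine Matrix.ext fun i j => ?_
      simp [hM, Matrix.mul_apply, Matrix.vecMulVec_apply]
      ring
    rw [e, Matrix.det_add_replicateCol_mul_replicateRow hu, hadj]
    have e2 : M.adjugate = M.det • M⁻¹ := by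
      rw [Matrix.inv_def, smul_smul, Ring.mul_inverse_cancel _ hu, one_smul]
    rw [e2, Matrix.det_unique (n := Unit)]
    simp only [Matrix.add_apply, Matrix.mul_apply, Matrix.replicateRow_apply,
      Matrix.replicateCol_apply, Matrix.one_apply_eq, Matrix.smul_apply, smul_eq_mul, mul_add,
      mul_one, Finset.mul_sum, Finset.sum_mul, map_mul]
    rw [Finset.sum_comm]
    congr 1
    refine Finset.sum_congr rfl fun i _ => Finset.sum_congr rfl fun j _ => ?_
    ring
  rw [s4_sigma_ps, key, map_add, hdet, PowerSeries.coeff_succ_X_mul]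
  congr 1
  simp [hP, Matrix.trace, Matrix.mul_apply, Matrix.vecMulVec_apply, -map_mul]
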